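/- Let R be a ring, N a finitely presented left R-module with presentation R^{1×m} →^A R^{1×n} → N → 0, and let N' be its Auslander transpose, the cokernel of Hom(A, R) : R^{n×1} → R^{m×1}. Then there is an exact sequence 0 → Ext¹(N', R) → N → Hom(Hom(N, R), R) → Ext²(N', R) → 0, where the middle map is the natural evaluation map. -/

import Mathlib

open CategoryTheory

section

variable (R : Type) [Ring R]

/-- The left `R`-module map `R^{1×m} → R^{1×n}`, `x ↦ x·A`. -/
def rowMulLinear {m n : ℕ} (A : Matrix (Fin m) (Fin n) R) :
    (Fin m → R) →ₗ[R] (Fin n → R) where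
  toFun x := fun j => ∑ i, x i * A i j
  map_add' x y := by
    funext j
    simp [add_mul, Finset.sum_add_distrib]
  map_smul' r x := by
    funext j
    simp [Finset.mul_sum, mul_assoc]

/-- The right `R`-module map `R^{n×1} → R^{m×1}`, `x ↦ A·x`, i.e. `Hom(A, R)`. -/
def colMulLinear {m n : ℕ} (A : Matrix (Fin m) (Fin n) R) :
    (Fin n → R) →ₗ[Rᵐᵒᵖ] (Fin m → R) where
  toFun x := fun i => ∑ j, A i j * x j
  map_add' x y := by
    funext i
    simp [mul_add, Finset.sum_add_distrib]
  map_smul' c x := by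
    funext i
    simp [MulOpposite.smul_eq_mul_unop, Finset.sum_mul, mul_assoc]

/-- The natural evaluation map `X → Hom_{Rᵒᵖ}(Hom_R(X, R), R)`, `x ↦ (φ ↦ φ(x))`,
as a homomorphism of abelian groups. -/
def evalHom (X : Type) [AddCommGroup X] [Module R X] :
    X →+ ((X →ₗ[R] R) →ₗ[Rᵐᵒᵖ] R) :=
  AddMonoidHom.mk'
    (fun x =>
      { toFun := fun φ => φ x
        map_add' := fun φ ψ => rfl
        map_smul' := fun c φ => rfl })
    (fun x y => by ext φ; exact φ.map_add x y)

end

/-!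
Let `d : R^{n×1} → R^{m×1}` be left multiplication by `A`, so that `N' = coker d`. Split `d` into
the short exact sequences `0 → ker d → R^{n×1} → im d → 0` and `0 → im d → R^{m×1} → N' → 0`. As
their middle terms are free, the long exact sequences of `Ext(-, Y)` give
`Ext¹(N', Y) ≅ coker (Hom(R^{m×1}, Y) → Hom(im d, Y))` and
`Ext²(N', Y) ≅ Ext¹(im d, Y) ≅ coker (Hom(R^{n×1}, Y) → Hom(ker d, Y))`.
Hence `Ext¹(N', Y)` and `Ext²(N', Y)` are the kernel and the cokernel of the restriction map
`coker Hom(d, Y) → Hom(ker d, Y)`. For `Y = R`, duality between row and column vectors identifies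
`coker Hom(d, R)` with `N` and `ker d` with `Hom(N, R)`, and restriction becomes evaluation.
-/

section Comparison

universe w v u

variable {C : Type u} [Category.{v} C] [Abelian C] (k : Type*) [Ring k] [Linear k C]

/-- `Extⁿ(X, Y)` computed by projective resolutions of `X`, to be distinguished from
`Abelian.Ext X Y n`, which is the group of morphisms `X ⟶ Y[n]` in the derived category. -/
noncomputable abbrev DerivedExt [EnoughProjectives C] (n : ℕ) (X Y : C) : ModuleCat k :=
  ((Ext k C n).obj (Opposite.op X)).obj Y

section Cocycles

variable [HasExt.{w} C] {X : C} (P : ProjectiveResolution X) (Y : C) (n : ℕ)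

/-- The class in `Abelian.Ext X Y (n + 1)` of a cocycle in degree `n + 1` of `Hom(P, Y)`, where `P`
is a projective resolution of `X`. -/
noncomputable def cocycleToExt :
    LinearMap.ker ((P.complex.linearYonedaObj k Y).sc' n (n + 1) (n + 2)).g.hom →+
      Abelian.Ext X Y (n + 1) :=
  AddMonoidHom.mk' (fun f ↦ P.extMk f.1 (n + 2) rfl f.2)
    fun f g ↦ (P.add_extMk f.1 g.1 _ rfl f.2 g.2).symm

lemma cocycleToExt_surjective : Function.Surjective (cocycleToExt k P Y n) := fun x ↦ by
  obtain ⟨f, hf, rfl⟩ := P.extMk_surjective x (n + 2) rfl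
  exact ⟨⟨f, hf⟩, rfl⟩

lemma ker_cocycleToExt :
    (cocycleToExt k P Y n).ker =
      (LinearMap.range ((P.complex.linearYonedaObj k Y).sc' n (n + 1) (n + 2)).moduleCatToCycles
        ).toAddSubgroup := by
  ext f
  exact (P.extMk_eq_zero_iff f.1 _ rfl f.2 n rfl).trans
    ⟨fun ⟨g, hg⟩ ↦ ⟨g, Subtype.ext hg⟩, fun ⟨g, hg⟩ ↦ ⟨g, congrArg Subtype.val hg⟩⟩

end Cocycles

variable [EnoughProjectives C]

/-- In positive degrees, the derived functors of `Hom(-, Y)` are the groups of morphisms in the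
derived category. -/
noncomputable def derivedExtAddEquiv [HasExt.{w} C] (X Y : C) (n : ℕ) :
    DerivedExt k (n + 1) X Y ≃+ Abelian.Ext X Y (n + 1) :=
  let P := projectiveResolution X
  let K := P.complex.linearYonedaObj k Y
  (P.isoExt (n + 1) Y ≪≫ K.homologyIsoSc' n (n + 1) (n + 2) (by simp) (by simp) ≪≫
    (K.sc' n (n + 1) (n + 2)).moduleCatHomologyIso).toLinearEquiv.toAddEquiv.trans
  (QuotientAddGroup.liftEquiv _ (cocycleToExt_surjective k P Y n) (ker_cocycleToExt k P Y n).symm)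

end Comparison

section DimensionShifting

open Abelian.Ext

universe w v u

variable {C : Type u} [Category.{v} C] [Abelian C] {S : ShortComplex C} (hS : S.ShortExact)

section HasExt

variable [HasExt.{w} C]

lemma extClass_comp_mk₀_eq_zero_iff {Y : C} {f : S.X₁ ⟶ Y} :
    hS.extClass.comp (mk₀ f) (add_zero 1) = 0 ↔ ∃ g : S.X₂ ⟶ Y, S.f ≫ g = f := by
  constructor
  · intro hf
    obtain ⟨x, hx⟩ := contravariant_sequence_exact₁ hS Y (mk₀ f) (add_zero 1) hf
    obtain ⟨g, rfl⟩ := (mk₀_bijective _ _).surjective x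
    exact ⟨g, (mk₀_bijective _ _).injective (by rwa [← mk₀_comp_mk₀])⟩
  · rintro ⟨g, rfl⟩
    rw [← mk₀_comp_mk₀]
    exact hS.extClass_comp_assoc _

lemma precomp_extClass_surjective [Projective S.X₂] (Y : C) (n : ℕ) :
    Function.Surjective (hS.extClass.precomp Y (Nat.add_comm 1 n)) := fun x ↦
  contravariant_sequence_exact₃ hS Y x (eq_zero_of_projective _) (Nat.add_comm 1 n)

lemma precomp_extClass_bijective [Projective S.X₂] (Y : C) (n : ℕ) :
    Function.Bijective (hS.extClass.precomp Y (Nat.add_comm 1 (n + 1))) := by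
  refine ⟨(injective_iff_map_eq_zero _).2 fun x hx ↦ ?_, precomp_extClass_surjective hS Y _⟩
  obtain ⟨y, rfl⟩ := contravariant_sequence_exact₁ hS Y x (Nat.add_comm 1 _) hx
  rw [y.eq_zero_of_projective, comp_zero]

end HasExt

variable (k : Type*) [Ring k] [Linear k C] [EnoughProjectives C] (Y : C)

/-- The connecting homomorphism `Hom(X₁, Y) → Ext¹(X₃, Y)` of a short exact sequence
`0 → X₁ → X₂ → X₃ → 0`. -/
noncomputable def connectingHom : (S.X₁ ⟶ Y) →+ DerivedExt k 1 S.X₃ Y :=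
  have := HasExt.standard C
  (derivedExtAddEquiv k S.X₃ Y 0).symm.toAddMonoidHom.comp
    ((hS.extClass.precomp Y (add_zero 1)).comp addEquiv₀.symm.toAddMonoidHom)

variable {Y} in
lemma connectingHom_eq_zero_iff {f : S.X₁ ⟶ Y} :
    connectingHom hS k Y f = 0 ↔ ∃ g : S.X₂ ⟶ Y, S.f ≫ g = f :=
  have := HasExt.standard C
  (derivedExtAddEquiv k S.X₃ Y 0).symm.map_eq_zero_iff.trans (extClass_comp_mk₀_eq_zero_iff hS)

variable [Projective S.X₂]

lemma connectingHom_surjective : Function.Surjective (connectingHom hS k Y) :=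
  have := HasExt.standard C
  (derivedExtAddEquiv k S.X₃ Y 0).symm.surjective.comp
    ((precomp_extClass_surjective hS Y 0).comp addEquiv₀.symm.surjective)

/-- The connecting isomorphism `Extⁿ⁺¹(X₁, Y) ≃ Extⁿ⁺²(X₃, Y)` of a short exact sequence
`0 → X₁ → X₂ → X₃ → 0` with `X₂` projective. -/
noncomputable def dimensionShift (n : ℕ) :
    DerivedExt k (n + 1) S.X₁ Y ≃+ DerivedExt k (n + 2) S.X₃ Y :=
  have := HasExt.standard C
  ((derivedExtAddEquiv k S.X₁ Y n).trans
    (AddEquiv.ofBijective _ (precomp_extClass_bijective hS Y n))).trans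
    (derivedExtAddEquiv k S.X₃ Y (n + 1)).symm

end DimensionShifting

lemma exists_injective_comp_eq {G H K : Type*} [AddGroup G] [AddGroup H] [AddGroup K]
    {q : G →+ H} (hq : Function.Surjective q) {t : G →+ K} (hqt : ∀ g, q g = 0 ↔ t g = 0) :
    ∃ ι : H →+ K, Function.Injective ι ∧ ι ∘ q = t := by
  let ι : H →+ K := q.liftOfSurjective hq ⟨t, fun g ↦ (hqt g).1⟩
  have hι (g : G) : ι (q g) = t g :=
    q.liftOfRightInverse_comp_apply _ (Function.rightInverse_surjInv hq) _ g
  refine ⟨ι, (injective_iff_map_eq_zero ι).2 fun y hy ↦ ?_, funext hι⟩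
  obtain ⟨x, rfl⟩ := hq y
  exact (hqt x).2 ((hι x).symm.trans hy)

section DualComplex

variable {S : Type*} [Ring S] (k : Type*) [Ring k] {M₁ M₀ : Type*} (Y : Type*)
  [AddCommGroup M₁] [Module S M₁] [AddCommGroup M₀] [Module S M₀]
  [AddCommGroup Y] [Module S Y] [Module k Y] [SMulCommClass S k Y]
  (d : M₁ →ₗ[S] M₀)

/-- The cokernel of `Hom(d, Y)`. -/
abbrev CokerDual : Type _ := (M₁ →ₗ[S] Y) ⧸ LinearMap.range (d.lcomp k Y)

/-- The map `coker Hom(d, Y) → Hom(ker d, Y)` induced by restriction from `M₁` to `ker d`. -/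
def restrictKer : CokerDual k Y d →ₗ[k] (LinearMap.ker d →ₗ[S] Y) :=
  (LinearMap.range (d.lcomp k Y)).liftQ ((LinearMap.ker d).subtype.lcomp k Y) <| by
    rintro _ ⟨g, rfl⟩
    ext x
    simp

/-- The map `Hom(range d, Y) → coker Hom(d, Y)` induced by precomposition with `M₁ → range d`. -/
def ofRangeDual : (LinearMap.range d →ₗ[S] Y) →ₗ[k] CokerDual k Y d :=
  (LinearMap.range (d.lcomp k Y)).mkQ ∘ₗ d.rangeRestrict.lcomp k Y

variable {k Y d}

lemma ofRangeDual_eq_zero_iff {φ : LinearMap.range d →ₗ[S] Y} :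
    ofRangeDual k Y d φ = 0 ↔ ∃ g : M₀ →ₗ[S] Y, g ∘ₗ (LinearMap.range d).subtype = φ := by
  refine (Submodule.Quotient.mk_eq_zero _).trans (exists_congr fun g ↦ ?_)
  exact LinearMap.cancel_right (f := g ∘ₗ (LinearMap.range d).subtype) d.surjective_rangeRestrict

lemma exists_comp_rangeRestrict_eq {f : M₁ →ₗ[S] Y} (hf : f ∘ₗ (LinearMap.ker d).subtype = 0) :
    ∃ φ : LinearMap.range d →ₗ[S] Y, φ ∘ₗ d.rangeRestrict = f := by
  refine ⟨(LinearMap.ker d).liftQ f (LinearMap.le_ker_iff_comp_subtype_eq_zero.2 hf) ∘ₗ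
      d.quotKerEquivRange.symm, LinearMap.ext fun x ↦ ?_⟩
  exact congrArg _ (d.quotKerEquivRange_symm_apply_image x _)

lemma exact_ofRangeDual_restrictKer :
    Function.Exact (ofRangeDual k Y d) (restrictKer k Y d) := by
  intro x
  constructor
  · obtain ⟨f, rfl⟩ := Submodule.Quotient.mk_surjective _ x
    intro hf
    obtain ⟨φ, rfl⟩ := exists_comp_rangeRestrict_eq hf
    exact ⟨φ, rfl⟩
  · rintro ⟨φ, rfl⟩
    refine LinearMap.ext fun x ↦ ?_
    change φ (d.rangeRestrict x) = 0
    rw [show d.rangeRestrict x = 0 from Subtype.ext x.2, map_zero]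

end DualComplex

section LinearConnectingHom

universe v u

variable {S : Type u} [Ring S] [Small.{v} S] {T : ShortComplex (ModuleCat.{v} S)}
  (hT : T.ShortExact) (l : Type*) [Ring l] [Linear l (ModuleCat.{v} S)] (Y : ModuleCat.{v} S)

/-- The connecting homomorphism `Hom(T₁, Y) → Ext¹(T₃, Y)` of a short exact sequence of modules,
on linear maps. -/
noncomputable def linearConnectingHom : (T.X₁ →ₗ[S] Y) →+ DerivedExt l 1 T.X₃ Y :=
  (connectingHom hT l Y).comp ModuleCat.homAddEquiv.symm.toAddMonoidHom

variable {l Y} in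
lemma linearConnectingHom_eq_zero_iff {φ : T.X₁ →ₗ[S] Y} :
    linearConnectingHom hT l Y φ = 0 ↔ ∃ g : T.X₂ →ₗ[S] Y, g ∘ₗ T.f.hom = φ :=
  (connectingHom_eq_zero_iff hT l).trans <|
    ModuleCat.homAddEquiv.exists_congr fun _ ↦ ModuleCat.hom_ext_iff

lemma linearConnectingHom_surjective [Projective T.X₂] :
    Function.Surjective (linearConnectingHom hT l Y) :=
  (connectingHom_surjective hT l Y).comp ModuleCat.homAddEquiv.symm.surjective

end LinearConnectingHom

section ModuleExt

universe v u

variable {S : Type u} [Ring S] {M₁ M₀ : Type v} [AddCommGroup M₁] [Module S M₁]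
  [AddCommGroup M₀] [Module S M₀] (d : M₁ →ₗ[S] M₀)

/-- The sequence `0 → ker d → M₁ → range d → 0`. -/
abbrev kerSequence : ShortComplex (ModuleCat.{v} S) :=
  ModuleCat.shortComplexOfCompEqZero (LinearMap.ker d).subtype d.rangeRestrict <|
    LinearMap.ext fun x ↦ Subtype.ext x.2

/-- The sequence `0 → range d → M₀ → coker d → 0`. -/
abbrev cokerSequence : ShortComplex (ModuleCat.{v} S) :=
  ModuleCat.shortComplexOfCompEqZero (LinearMap.range d).subtype (LinearMap.range d).mkQ
    (LinearMap.exact_subtype_mkQ _).linearMap_comp_eq_zero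

lemma kerSequence_shortExact : (kerSequence d).ShortExact :=
  ModuleCat.shortComplex_shortExact _ (fun x ↦ by simp [Subtype.ext_iff])
    (LinearMap.ker d).injective_subtype d.surjective_rangeRestrict

lemma cokerSequence_shortExact : (cokerSequence d).ShortExact :=
  ModuleCat.shortComplex_shortExact _ (LinearMap.exact_subtype_mkQ _)
    (LinearMap.range d).injective_subtype (LinearMap.range d).mkQ_surjective

variable [Small.{v} S] (l k : Type*) [Ring l] [Linear l (ModuleCat.{v} S)] [Ring k]
  (Y : Type v) [AddCommGroup Y] [Module S Y] [Module k Y] [SMulCommClass S k Y]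

theorem exists_exact_restrictKer_left [Module.Projective S M₀] :
    ∃ ι : DerivedExt l 1 (ModuleCat.of S (M₀ ⧸ LinearMap.range d)) (ModuleCat.of S Y) →+
        CokerDual k Y d,
      Function.Injective ι ∧ Function.Exact ι (restrictKer k Y d) := by
  have : Projective (cokerSequence d).X₂ :=
    ModuleCat.projective_of_categoryTheory_projective (ModuleCat.of S M₀)
  have hd := cokerSequence_shortExact d
  have hδ := linearConnectingHom_surjective hd l (ModuleCat.of S Y)
  obtain ⟨ι, hι, hιδ⟩ := exists_injective_comp_eq hδ (t := (ofRangeDual k Y d).toAddMonoidHom)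
    fun φ ↦ (linearConnectingHom_eq_zero_iff hd).trans ofRangeDual_eq_zero_iff.symm
  refine ⟨ι, hι, fun x ↦ ?_⟩
  rw [exact_ofRangeDual_restrictKer, ← hδ.range_comp, hιδ]
  rfl

theorem exists_exact_restrictKer_right [Module.Projective S M₁] [Module.Projective S M₀] :
    ∃ π : (LinearMap.ker d →ₗ[S] Y) →+
        DerivedExt l 2 (ModuleCat.of S (M₀ ⧸ LinearMap.range d)) (ModuleCat.of S Y),
      Function.Exact (restrictKer k Y d) π ∧ Function.Surjective π := by
  have : Projective (kerSequence d).X₂ :=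
    ModuleCat.projective_of_categoryTheory_projective (ModuleCat.of S M₁)
  have : Projective (cokerSequence d).X₂ :=
    ModuleCat.projective_of_categoryTheory_projective (ModuleCat.of S M₀)
  have hd := kerSequence_shortExact d
  let σ := dimensionShift (cokerSequence_shortExact d) l (ModuleCat.of S Y) 0
  refine ⟨σ.toAddMonoidHom.comp (linearConnectingHom hd l (ModuleCat.of S Y)), fun ψ ↦ ?_,
    σ.surjective.comp (linearConnectingHom_surjective hd l (ModuleCat.of S Y))⟩
  exact σ.map_eq_zero_iff.trans <| (linearConnectingHom_eq_zero_iff hd).trans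
    ((Submodule.Quotient.mk_surjective _).exists (p := fun x ↦ restrictKer k Y d x = ψ)).symm

end ModuleExt

section MatrixDuality

lemma projective_mulOpposite_pi (ι R : Type*) [Finite ι] [Semiring R] :
    Module.Projective Rᵐᵒᵖ (ι → R) :=
  .of_equiv (LinearEquiv.piCongrRight fun _ : ι ↦ (MulOpposite.opLinearEquiv Rᵐᵒᵖ (M := R)).symm)

section Functionals

variable {ι R : Type*} [Fintype ι] [DecidableEq ι] [Semiring R]

/-- Row vectors act on column vectors by `u ↦ ∑ i, v i * u i`. With `R` acting by left
multiplication on rows and `Rᵐᵒᵖ` by right multiplication on columns, this identifies the rows with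
the dual of the columns. -/
def rowEquiv : (ι → R) ≃ₗ[R] ((ι → R) →ₗ[Rᵐᵒᵖ] R) where
  __ := dotProductBilin R Rᵐᵒᵖ
  invFun f j := f (Pi.single j 1)
  left_inv v := funext fun j ↦ by simp
  right_inv f := by ext j; simp

/-- Column vectors act on row vectors by `v ↦ ∑ i, v i * u i`, which identifies the columns with the
dual of the rows. -/
def columnEquiv : (ι → R) ≃ₗ[Rᵐᵒᵖ] ((ι → R) →ₗ[R] R) where
  __ := (dotProductBilin R Rᵐᵒᵖ).flip
  invFun f j := f (Pi.single j 1)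
  left_inv v := funext fun j ↦ by simp
  right_inv f := by ext j; simp

end Functionals

variable {R : Type} [Ring R] {m n : ℕ} (A : Matrix (Fin m) (Fin n) R)

lemma rowEquiv_comp_colMulLinear (v : Fin m → R) :
    rowEquiv v ∘ₗ colMulLinear R A = rowEquiv (rowMulLinear R A v) :=
  LinearMap.ext fun u ↦ Matrix.dotProduct_mulVec v A u

lemma columnEquiv_comp_rowMulLinear (u : Fin n → R) :
    columnEquiv u ∘ₗ rowMulLinear R A = columnEquiv (colMulLinear R A u) :=
  LinearMap.ext fun v ↦ (Matrix.dotProduct_mulVec v A u).symm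

lemma columnEquiv_comp_rowMulLinear_eq_zero_iff {u : Fin n → R} :
    columnEquiv u ∘ₗ rowMulLinear R A = 0 ↔ u ∈ LinearMap.ker (colMulLinear R A) := by
  rw [columnEquiv_comp_rowMulLinear, LinearEquiv.map_eq_zero_iff, LinearMap.mem_ker]

/-- The left module `N` presented by `A` is the cokernel of `Hom(d, R)`, where `d` is left
multiplication by `A` on column vectors. -/
def cokerEquivCokerDual :
    ((Fin n → R) ⧸ LinearMap.range (rowMulLinear R A)) ≃ₗ[R] CokerDual R R (colMulLinear R A) :=
  Submodule.Quotient.equiv _ _ rowEquiv <| by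
    have h : rowEquiv.toLinearMap ∘ₗ rowMulLinear R A =
        (colMulLinear R A).lcomp R R ∘ₗ rowEquiv.toLinearMap :=
      LinearMap.ext fun v ↦ (rowEquiv_comp_colMulLinear A v).symm
    rw [← LinearMap.range_comp, h, LinearMap.range_comp_of_range_eq_top _ rowEquiv.range]

/-- The kernel of left multiplication by `A` on column vectors is the dual of the left module
presented by `A`: `u` corresponds to the functional sending the class of `v` to `∑ i, v i * u i`. -/
def kerEquivDual :
    LinearMap.ker (colMulLinear R A) ≃ₗ[Rᵐᵒᵖ]
      (((Fin n → R) ⧸ LinearMap.range (rowMulLinear R A)) →ₗ[R] R) where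
  toFun u := (LinearMap.range (rowMulLinear R A)).liftQ (columnEquiv u.1)
    (LinearMap.range_le_ker_iff.2 ((columnEquiv_comp_rowMulLinear_eq_zero_iff A).2 u.2))
  map_add' u v := by ext; simp
  map_smul' c u := by ext; simp
  invFun φ := ⟨columnEquiv.symm (φ ∘ₗ Submodule.mkQ _), by
    rw [← columnEquiv_comp_rowMulLinear_eq_zero_iff, LinearEquiv.apply_symm_apply,
      LinearMap.comp_assoc, LinearMap.range_mkQ_comp, LinearMap.comp_zero]⟩
  left_inv u := Subtype.ext (columnEquiv.symm_apply_apply u.1)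
  right_inv φ := Submodule.linearMap_qext _ (columnEquiv.apply_symm_apply _)

lemma restrictKer_cokerEquivCokerDual (x : (Fin n → R) ⧸ LinearMap.range (rowMulLinear R A)) :
    restrictKer R R (colMulLinear R A) (cokerEquivCokerDual A x) =
      evalHom R _ x ∘ₗ (kerEquivDual A).toLinearMap := by
  obtain ⟨v, rfl⟩ := Submodule.Quotient.mk_surjective _ x
  rfl

end MatrixDuality

/-- **Auslander's exact sequence.**  Let `N` be the finitely presented left `R`-module
presented by `R^{1×m} →^A R^{1×n} → N → 0` and let `N'` be its Auslander transpose,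
the cokernel of `Hom(A, R) : R^{n×1} → R^{m×1}`.  Then there is an exact sequence
`0 → Ext¹(N', R) → N → Hom(Hom(N, R), R) → Ext²(N', R) → 0`
whose middle map is the natural evaluation map. -/
theorem auslander_exact_sequence (R : Type) [Ring R] (m n : ℕ)
    (A : Matrix (Fin m) (Fin n) R) :
    ∃ (ι : (((Ext ℤ (ModuleCat.{0} Rᵐᵒᵖ) 1).obj
              (Opposite.op (ModuleCat.of Rᵐᵒᵖ
                ((Fin m → R) ⧸ LinearMap.range (colMulLinear R A))))).obj
              (ModuleCat.of Rᵐᵒᵖ R)) →+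
            ((Fin n → R) ⧸ LinearMap.range (rowMulLinear R A)))
      (π : ((((Fin n → R) ⧸ LinearMap.range (rowMulLinear R A)) →ₗ[R] R) →ₗ[Rᵐᵒᵖ] R) →+
            (((Ext ℤ (ModuleCat.{0} Rᵐᵒᵖ) 2).obj
              (Opposite.op (ModuleCat.of Rᵐᵒᵖ
                ((Fin m → R) ⧸ LinearMap.range (colMulLinear R A))))).obj
              (ModuleCat.of Rᵐᵒᵖ R))),
      Function.Injective ι ∧
      (∀ x, evalHom R ((Fin n → R) ⧸ LinearMap.range (rowMulLinear R A)) x = 0 ↔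
        x ∈ Set.range ι) ∧
      (∀ d, π d = 0 ↔
        d ∈ Set.range (evalHom R ((Fin n → R) ⧸ LinearMap.range (rowMulLinear R A)))) ∧
      Function.Surjective π := by
  have := projective_mulOpposite_pi (Fin n) R
  have := projective_mulOpposite_pi (Fin m) R
  obtain ⟨ι, hι, hι_exact⟩ := exists_exact_restrictKer_left (colMulLinear R A) ℤ R R
  obtain ⟨π, hπ_exact, hπ⟩ := exists_exact_restrictKer_right (colMulLinear R A) ℤ R R
  let e := (cokerEquivCokerDual A).toAddEquiv
  let c := ((kerEquivDual A).symm.congrLeft R R).toAddEquiv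
  have hc (x) : c (evalHom R _ x) = restrictKer R R (colMulLinear R A) (e x) :=
    (restrictKer_cokerEquivCokerDual A x).symm
  refine ⟨e.symm.toAddMonoidHom.comp ι, π.comp c.toAddMonoidHom, e.symm.injective.comp hι,
    fun x ↦ ?_, fun ψ ↦ ?_, hπ.comp c.surjective⟩
  · rw [← c.map_eq_zero_iff, hc, hι_exact]
    exact exists_congr fun _ ↦ e.symm_apply_eq.symm
  · refine (hπ_exact (c ψ)).trans (e.surjective.exists.trans (exists_congr fun x ↦ ?_))
    rw [← hc, c.injective.eq_iff]
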